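/- Let C be an algebraically closed field of characteristic 0, G a group, ρ : G → GLₙ(C) a semisimple representation with trace t, and H a finite index subgroup of G. If the restriction t|_H is a sum of n characters (i.e., there exist group homomorphisms χ₁,…,χₙ : H → Cˣ with t(h) = χ₁(h)+⋯+χₙ(h) for all h ∈ H), then ρ(H) is an abelian subgroup of GLₙ(C). -/

import Mathlib

noncomputable instance repAsModuleAddCommGroup {k G V : Type*} [CommSemiring k] [Monoid G]
    [AddCommGroup V] [Module k V] (ρ : Representation k G V) :
    AddCommGroup ρ.asModule :=
  inferInstanceAs (AddCommGroup V)

open Polynomial in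
/-- An endomorphism all of whose positive powers have trace zero has no nonzero fixed vector. -/
lemma aux_fixed_eq_zero {C V : Type*} [Field C] [CharZero C] [AddCommGroup V] [Module C V]
    [FiniteDimensional C V] (x : Module.End C V)
    (hx : ∀ k : ℕ, LinearMap.trace C V (x ^ (k + 1)) = 0) (s : V) (hs : x s = s) : s = 0 := by
  have hp0 : x.charpoly ≠ 0 := x.charpoly_monic.ne_zero
  obtain ⟨q, hq, hnd⟩ := exists_eq_pow_rootMultiplicity_mul_and_not_dvd x.charpoly hp0 1
  set a := x.charpoly.rootMultiplicity 1
  have hirr : Irreducible (X - Polynomial.C (1 : C)) := irreducible_X_sub_C 1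
  have h1 : IsCoprime (X - Polynomial.C (1 : C)) q := (hirr.coprime_iff_not_dvd).2 hnd
  have h2 : IsCoprime (X - Polynomial.C (1 : C)) X :=
    ⟨-1, 1, by simp⟩
  obtain ⟨u, v, huv⟩ := (IsCoprime.mul_right h2 h1).pow_left (m := a + 1)
  set e : Module.End C V := aeval x (v * (X * q)) with he
  have hu : aeval x (u * (X - Polynomial.C (1 : C)) ^ (a + 1)) = 1 - e := by
    rw [he, eq_sub_iff_add_eq, ← map_add, huv, map_one]
  have hidem : e * (1 - e) = 0 := by
    have : v * (X * q) * (u * (X - Polynomial.C (1 : C)) ^ (a + 1))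
        = (v * X * u * (X - Polynomial.C (1 : C))) * x.charpoly := by
      rw [hq]; ring
    rw [← hu, he, ← map_mul, this, map_mul, LinearMap.aeval_self_charpoly, mul_zero]
  have hidem' : IsIdempotentElem e := by
    rw [mul_sub, mul_one, sub_eq_zero] at hidem
    exact hidem.symm
  have htr : ∀ r : C[X], LinearMap.trace C V (aeval x (r * X)) = 0 := by
    intro r
    induction r using Polynomial.induction_on' with
    | add p q hp hq => rw [add_mul, map_add, map_add, hp, hq, add_zero]
    | monomial k c =>
      rw [← C_mul_X_pow_eq_monomial, mul_assoc, ← pow_succ, map_mul, aeval_C, map_pow, aeval_X,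
        ← Algebra.smul_def, map_smul, hx, smul_zero]
  have htre : LinearMap.trace C V e = 0 := by
    have := htr (v * q)
    rwa [show v * q * X = v * (X * q) by ring] at this
  have hproj : LinearMap.IsProj (LinearMap.range e) e :=
    LinearMap.isProj_range_iff_isIdempotentElem e |>.2 hidem'
  have hr := hproj.trace
  rw [htre] at hr
  have hr0 : Module.finrank C (LinearMap.range e) = 0 := by exact_mod_cast hr.symm
  have hbot : LinearMap.range e = ⊥ := Submodule.finrank_eq_zero.1 hr0
  have he0 : e = 0 := LinearMap.range_eq_bot.1 hbot
  have h3 : (1 - e) s = 0 := by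
    rw [← hu, pow_succ, ← mul_assoc, map_mul]
    simp [hs]
  simpa [he0] using h3

/-- In characteristic zero, `u ^ m = 1` and full trace on all powers force `u = 1`. -/
lemma aux_eq_one {C V : Type*} [Field C] [CharZero C] [AddCommGroup V] [Module C V]
    [FiniteDimensional C V] (u : Module.End C V) (m : ℕ) (hm : m ≠ 0) (hum : u ^ m = 1)
    (ht : ∀ k : ℕ, LinearMap.trace C V (u ^ k) = Module.finrank C V) : u = 1 := by
  have hmC : (m : C) ≠ 0 := by exact_mod_cast hm
  set S : Module.End C V := ∑ k ∈ Finset.range m, u ^ k with hS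
  have huS : u * S = S := by
    have := Finset.sum_range_succ' (fun k => u ^ k) m
    rw [Finset.sum_range_succ, hum, pow_zero] at this
    have h2 := add_right_cancel this
    rw [hS, Finset.mul_sum, h2]
    exact Finset.sum_congr rfl fun k _ => (pow_succ' u k).symm
  have hukS : ∀ k : ℕ, u ^ k * S = S := by
    intro k
    induction k with
    | zero => simp
    | succ k ih => rw [pow_succ, mul_assoc, huS, ih]
  have hSS : S * S = (m : C) • S := by
    conv_lhs => rw [hS, Finset.sum_mul]
    rw [Finset.sum_congr rfl fun k _ => hukS k]
    simp [Nat.cast_smul_eq_nsmul]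
  set P : Module.End C V := (m : C)⁻¹ • S with hP
  have hPi : IsIdempotentElem P := by
    show P * P = P
    rw [hP, smul_mul_smul_comm, hSS, smul_smul, mul_assoc, inv_mul_cancel₀ hmC, mul_one]
  have htr : LinearMap.trace C V P = Module.finrank C V := by
    rw [hP, map_smul, hS, map_sum, Finset.sum_congr rfl fun k _ => ht k]
    simp [hmC]
  have hproj : LinearMap.IsProj (LinearMap.range P) P :=
    LinearMap.isProj_range_iff_isIdempotentElem P |>.2 hPi
  have hr := hproj.trace
  rw [htr] at hr
  have hr' : Module.finrank C (LinearMap.range P) = Module.finrank C V := by exact_mod_cast hr.symm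
  have htop : LinearMap.range P = ⊤ := Submodule.eq_top_of_finrank_eq hr'
  have huP : u * P = P := by rw [hP, mul_smul_comm, huS]
  ext v
  obtain ⟨w, rfl⟩ : v ∈ LinearMap.range P := htop ▸ Submodule.mem_top
  exact congrArg (fun f : Module.End C V => f w) huP

/-- The kernel of the trace form on the span of a normal subgroup vanishes. -/
lemma aux_radical {C G V : Type*} [Field C] [CharZero C] [AddCommGroup V] [Module C V]
    [FiniteDimensional C V] [Group G] (ρ : Representation C G V)
    (hss : ρ.IsSemisimpleRepresentation) (N : Subgroup G) [hN : N.Normal]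
    (B : Subalgebra C (Module.End C V))
    (hB : B = Algebra.adjoin C (ρ '' (N : Set G)))
    (x : Module.End C V) (hxB : x ∈ B) (hx : ∀ b ∈ B, LinearMap.trace C V (x * b) = 0) :
    x = 0 := by
  have hconj : ∀ g : G, ∀ b ∈ B, ρ g * b * ρ g⁻¹ ∈ B := by
    intro g b hb
    have hgg : ρ g⁻¹ * ρ g = 1 := by rw [← map_mul]; simp
    have hgg' : ρ g * ρ g⁻¹ = 1 := by rw [← map_mul]; simp
    rw [hB] at hb
    induction hb using Algebra.adjoin_induction with
    | mem b hb =>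
      obtain ⟨y, hy, rfl⟩ := hb
      rw [← map_mul, ← map_mul, hB]
      exact Algebra.subset_adjoin ⟨_, hN.conj_mem y hy g, rfl⟩
    | algebraMap r =>
      rw [← Algebra.commutes, mul_assoc, hgg', mul_one]
      exact B.algebraMap_mem r
    | add a b _ _ ha hb => rw [mul_add, add_mul]; exact B.add_mem ha hb
    | mul a b _ _ ha hb =>
      have : ρ g * (a * b) * ρ g⁻¹ = (ρ g * a * ρ g⁻¹) * (ρ g * b * ρ g⁻¹) := by
        calc ρ g * (a * b) * ρ g⁻¹ = ρ g * a * 1 * b * ρ g⁻¹ := by simp only [mul_one, mul_assoc]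
          _ = _ := by rw [← hgg]; simp only [mul_assoc]
      rw [this]; exact B.mul_mem ha hb
  let I : Set (Module.End C V) := {x | x ∈ B ∧ ∀ b ∈ B, LinearMap.trace C V (x * b) = 0}
  have hIconj : ∀ g : G, ∀ z ∈ I, ρ g⁻¹ * z * ρ g ∈ I := by
    rintro g z ⟨hz, hz'⟩
    refine ⟨by simpa using hconj g⁻¹ z hz, fun b hb => ?_⟩
    have := hz' _ (hconj g b hb)
    rw [show ρ g⁻¹ * z * ρ g * b = ρ g⁻¹ * (z * ρ g * b) by simp only [mul_assoc],
      LinearMap.trace_mul_comm]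
    rwa [show z * ρ g * b * ρ g⁻¹ = z * (ρ g * b * ρ g⁻¹) by simp only [mul_assoc]]
  have hIleft : ∀ b ∈ B, ∀ z ∈ I, b * z ∈ I := by
    rintro b hb z ⟨hz, hz'⟩
    refine ⟨B.mul_mem hb hz, fun c hc => ?_⟩
    rw [mul_assoc, LinearMap.trace_mul_comm, mul_assoc]
    exact hz' _ (B.mul_mem hc hb)
  have hIfix : ∀ z ∈ I, ∀ s : V, z s = s → s = 0 := by
    rintro z ⟨hz, hz'⟩ s hs
    refine aux_fixed_eq_zero z (fun k => ?_) s hs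
    rw [pow_succ']
    exact hz' _ (B.pow_mem hz k)
  let K : Subrepresentation ρ :=
    { toSubmodule :=
        { carrier := {v | ∀ z ∈ I, z v = 0}
          add_mem' := fun {a b} ha hb z hz => by rw [map_add, ha z hz, hb z hz, add_zero]
          zero_mem' := fun z _ => map_zero z
          smul_mem' := fun c a ha z hz => by rw [map_smul, ha z hz, smul_zero] }
      apply_mem_toSubmodule := by
        intro g v hv z hz
        have h1 : (ρ g⁻¹ * z * ρ g) v = 0 := hv _ (hIconj g z hz)
        have h2 : ρ g (ρ g⁻¹ (z (ρ g v))) = 0 := by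
          have : ρ g⁻¹ (z (ρ g v)) = 0 := h1
          rw [this, map_zero]
        simpa using h2 }
  obtain ⟨W, hW⟩ := exists_isCompl K
  have hWB : ∀ b ∈ B, ∀ w ∈ W.toSubmodule, b w ∈ W.toSubmodule := by
    intro b hb
    rw [hB] at hb
    induction hb using Algebra.adjoin_induction with
    | mem b hb =>
      obtain ⟨y, hy, rfl⟩ := hb
      exact fun w hw => W.apply_mem_toSubmodule y hw
    | algebraMap r =>
      intro w hw
      simpa [Module.algebraMap_end_apply] using W.toSubmodule.smul_mem r hw
    | add a b _ _ ha hb => exact fun w hw => W.toSubmodule.add_mem (ha w hw) (hb w hw)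
    | mul a b _ _ ha hb => exact fun w hw => ha _ (hb w hw)
  have hinf : ∀ v, v ∈ K.toSubmodule → v ∈ W.toSubmodule → v = 0 := by
    intro v h1 h2
    have h3 : v ∈ K ⊓ W := ⟨h1, h2⟩
    rw [hW.inf_eq_bot] at h3
    exact h3
  have hWbot : W.toSubmodule = ⊥ := by
    by_contra hne
    let T : Set (Submodule C V) :=
      {S | S ≠ ⊥ ∧ S ≤ W.toSubmodule ∧ ∀ b ∈ B, ∀ v ∈ S, b v ∈ S}
    obtain ⟨S, ⟨hS0, hSW, hSB⟩, hmin⟩ :=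
      (wellFounded_lt (α := Submodule C V)).has_min T ⟨W.toSubmodule, hne, le_rfl, hWB⟩
    have hSK : S ≤ K.toSubmodule := by
      intro s hs z hz
      by_contra hzs
      let S' : Submodule C V :=
        (Subalgebra.toSubmodule B).map (LinearMap.applyₗ (R := C) (M₂ := V) (z s))
      have hS'mem : ∀ v, v ∈ S' ↔ ∃ b ∈ B, b (z s) = v := fun v => Iff.rfl
      have hS'le : S' ≤ S := by
        intro v hv
        obtain ⟨b, hb, rfl⟩ := (hS'mem v).1 hv
        exact hSB b hb _ (hSB z hz.1 s hs)
      have hS'T : S' ∈ T := by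
        refine ⟨?_, hS'le.trans hSW, ?_⟩
        · intro h0
          apply hzs
          have : z s ∈ S' := (hS'mem _).2 ⟨1, B.one_mem, rfl⟩
          rw [h0] at this
          exact this
        · intro b hb v hv
          obtain ⟨c, hc, rfl⟩ := (hS'mem v).1 hv
          exact (hS'mem _).2 ⟨b * c, B.mul_mem hb hc, rfl⟩
      have heq : S' = S := by
        by_contra hne'
        exact hmin S' hS'T (lt_of_le_of_ne hS'le hne')
      obtain ⟨b, hb, hbs⟩ := (hS'mem s).1 (heq ▸ hs)
      have hs0 : s = 0 := hIfix (b * z) (hIleft b hb z hz) s hbs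
      exact hzs (by rw [hs0, map_zero])
    apply hS0
    rw [eq_bot_iff]
    intro s hs
    exact hinf s (hSK hs) (hSW hs)
  have hsup : K.toSubmodule = ⊤ := by
    have h := congrArg Subrepresentation.toSubmodule hW.sup_eq_top
    rw [Subrepresentation.toSubmodule_sup, hWbot, sup_bot_eq] at h
    exact h
  ext v
  have hv : v ∈ K.toSubmodule := hsup ▸ Submodule.mem_top
  exact hv x ⟨hxB, hx⟩

/-- If a semisimple representation of a group over an algebraically closed field of
characteristic zero has trace on a finite index subgroup H equal to a sum of n characters,
then the image of H is abelian. -/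
theorem abelian_image_of_trace_sum_of_characters
    (C : Type*) [Field C] [IsAlgClosed C] [CharZero C]
    (G : Type*) [Group G] (n : ℕ)
    (ρ : Representation C G (Fin n → C))
    (hss : IsSemisimpleModule (MonoidAlgebra C G) ρ.asModule)
    (H : Subgroup G) [H.FiniteIndex]
    (χ : Fin n → (↥H →* Cˣ))
    (htr : ∀ h : ↥H, LinearMap.trace C (Fin n → C) (ρ (h : G)) = ∑ i, (χ i h : C)) :
    ∀ h₁ ∈ H, ∀ h₂ ∈ H, ρ h₁ * ρ h₂ = ρ h₂ * ρ h₁ := by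
  have hss' : ρ.IsSemisimpleRepresentation :=
    (Representation.isSemisimpleRepresentation_iff_isSemisimpleModule_asModule ρ).2 hss
  let N := H.normalCore
  have hNH : N ≤ H := H.normalCore_le
  -- elements of `N` killed by all characters act trivially
  have key : ∀ y : H, (y : G) ∈ N → (∀ i, χ i y = 1) → ρ (y : G) = 1 := by
    intro y hy hχ
    have hyB : ρ (y : G) ∈ Algebra.adjoin C (ρ '' (N : Set G)) :=
      Algebra.subset_adjoin ⟨_, hy, rfl⟩
    rw [← sub_eq_zero]
    refine aux_radical ρ hss' N _ rfl _ (Subalgebra.sub_mem _ hyB (Subalgebra.one_mem _)) ?_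
    intro b hb
    rw [← Subalgebra.mem_toSubmodule, Algebra.adjoin_eq_span] at hb
    have hcl : Submonoid.closure (ρ '' (N : Set G)) = N.toSubmonoid.map ρ :=
      Submonoid.closure_eq (N.toSubmonoid.map ρ)
    rw [hcl] at hb
    induction hb using Submodule.span_induction with
    | mem b hb =>
      obtain ⟨z, hz, rfl⟩ := hb
      have h1 := htr ⟨z, hNH hz⟩
      have h2 := htr (y * ⟨z, hNH hz⟩)
      rw [sub_mul, one_mul, map_sub, ← map_mul, sub_eq_zero]
      simp only [map_mul, hχ, one_mul] at h2
      rw [h1, ← h2]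
      simp
    | zero => simp
    | add a b _ _ ha hb => rw [mul_add, map_add, ha, hb, add_zero]
    | smul c a _ ha => rw [mul_smul_comm, map_smul, ha, smul_zero]
  intro h₁ hh₁ h₂ hh₂
  let a : H := ⟨h₁, hh₁⟩
  let b : H := ⟨h₂, hh₂⟩
  let h : H := a * b * a⁻¹ * b⁻¹
  have hχ : ∀ i, χ i h = 1 := by
    intro i
    simp only [h, map_mul, map_inv]
    rw [mul_comm (χ i a) (χ i b)]
    simp
  obtain ⟨m, hm0, -, hmN⟩ :=
    Subgroup.exists_pow_mem_of_index_ne_zero (H := N) Subgroup.FiniteIndex.index_ne_zero (h : G)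
  have hone : ρ (h : G) = 1 := by
    refine aux_eq_one (ρ (h : G)) m (by omega) ?_ ?_
    · rw [← map_pow]
      exact key (h ^ m) (by simpa using hmN) (fun i => by rw [map_pow, hχ, one_pow])
    · intro k
      have := htr (h ^ k)
      simp only [map_pow, hχ, one_pow, Subgroup.coe_pow] at this
      rw [this]
      simp
  have hab : h₁ * h₂ = (h : G) * (h₂ * h₁) := by
    simp [h, a, b, mul_assoc]
  rw [← map_mul, ← map_mul, hab, map_mul, hone, one_mul]
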